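/- arXiv:0905.0034 — 4 statements merged into one kernel-verified Lean document; each statement's English description precedes it below -/
import Mathlib

section
/- Let F be a field of characteristic zero, θ(X) = dXd⁻¹ with d = diag(−1,1), and 𝔥^⊥ the space of antidiagonal matrices in 𝔰𝔩₂(F). A linear subspace 𝔞 ⊆ 𝔥^⊥ is a Cartan subspace of 𝔥^⊥ — that is, a maximal abelian subspace of 𝔥^⊥ all of whose elements are semisimple — if and only if 𝔞 = 𝔞_c for some c ∈ F^×, where 𝔞_c is the line spanned by the matrix X_c with first row (0, c) and second row (1, 0). In particular, every such Cartan subspace is one-dimensional. -/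
open Matrix

/-- The subspace `𝔥^⊥` of antidiagonal matrices (the `(−1)`-eigenspace of the involution
`θ(X) = dXd⁻¹`, `d = diag(−1,1)`, inside `𝔰𝔩₂(F)`). -/
def antidiagSubspace (F : Type*) [Field F] : Submodule F (Matrix (Fin 2) (Fin 2) F) where
  carrier := {X | ∀ i, X i i = 0}
  add_mem' := by
    intro a b ha hb i
    simp [Matrix.add_apply, ha i, hb i]
  zero_mem' := by intro i; simp
  smul_mem' := by
    intro c X hX i
    simp [Matrix.smul_apply, hX i]

/-- A matrix is semisimple if it is diagonalizable over an algebraic closure of `F`. -/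
def IsSemisimpleMat (F : Type*) [Field F] (X : Matrix (Fin 2) (Fin 2) F) : Prop :=
  ∃ P : (Matrix (Fin 2) (Fin 2) (AlgebraicClosure F))ˣ,
    (((P⁻¹ : (Matrix (Fin 2) (Fin 2) (AlgebraicClosure F))ˣ) :
        Matrix (Fin 2) (Fin 2) (AlgebraicClosure F)) *
      X.map (algebraMap F (AlgebraicClosure F)) *
      (P : Matrix (Fin 2) (Fin 2) (AlgebraicClosure F))).IsDiag

/-- The matrix `X_c` with rows `(0, c)` and `(1, 0)`. -/
def Xc (F : Type*) [Field F] (c : F) : Matrix (Fin 2) (Fin 2) F := !![0, c; 1, 0]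

/-- `𝔞` is a Cartan subspace of `𝔥^⊥`: it is contained in `𝔥^⊥`, abelian (the Lie bracket
vanishes identically on it), consists of semisimple elements, and is maximal among abelian
subspaces of `𝔥^⊥`. -/
def IsCartanSubspace (F : Type*) [Field F] (𝔞 : Submodule F (Matrix (Fin 2) (Fin 2) F)) : Prop :=
  𝔞 ≤ antidiagSubspace F ∧
  (∀ X ∈ 𝔞, ∀ Y ∈ 𝔞, ⁅X, Y⁆ = (0 : Matrix (Fin 2) (Fin 2) F)) ∧
  (∀ X ∈ 𝔞, IsSemisimpleMat F X) ∧
  (∀ 𝔟 : Submodule F (Matrix (Fin 2) (Fin 2) F), 𝔟 ≤ antidiagSubspace F →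
    (∀ X ∈ 𝔟, ∀ Y ∈ 𝔟, ⁅X, Y⁆ = (0 : Matrix (Fin 2) (Fin 2) F)) → 𝔞 ≤ 𝔟 → 𝔞 = 𝔟)

theorem mem_span_Xc_iff {F : Type*} [Field F] {c : F} {Y : Matrix (Fin 2) (Fin 2) F} :
    Y ∈ Submodule.span F {Xc F c} ↔ Y ∈ antidiagSubspace F ∧ Y 0 1 = c * Y 1 0 := by
  rw [Submodule.mem_span_singleton]
  constructor
  · rintro ⟨t, rfl⟩
    refine ⟨fun i => ?_, ?_⟩
    · fin_cases i <;> simp [Xc]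
    · simp [Xc, mul_comm]
  · rintro ⟨hY, h⟩
    refine ⟨Y 1 0, ?_⟩
    have h0 := hY 0
    have h1 := hY 1
    ext i j
    fin_cases i <;> fin_cases j <;> simp [Xc, h0, h1, h, mul_comm]

theorem lie_eq_zero_iff_of_mem_antidiagSubspace {F : Type*} [Field F]
    {X Y : Matrix (Fin 2) (Fin 2) F}
    (hX : X ∈ antidiagSubspace F) (hY : Y ∈ antidiagSubspace F) :
    ⁅X, Y⁆ = 0 ↔ X 0 1 * Y 1 0 = Y 0 1 * X 1 0 := by
  have hX0 := hX 0
  have hX1 := hX 1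
  have hY0 := hY 0
  have hY1 := hY 1
  rw [Ring.lie_def, sub_eq_zero]
  constructor
  · intro h
    simpa [Matrix.mul_apply, Fin.sum_univ_two, hX0, hY0] using congrFun (congrFun h 0) 0
  · intro h
    ext i j
    fin_cases i <;> fin_cases j <;>
      simp [Matrix.mul_apply, Fin.sum_univ_two, hX0, hX1, hY0, hY1]
    · exact h
    · linear_combination -h

theorem lie_eq_zero_of_mem_span_Xc {F : Type*} [Field F] {c : F}
    {X Y : Matrix (Fin 2) (Fin 2) F} (hX : X ∈ Submodule.span F {Xc F c})
    (hY : Y ∈ Submodule.span F {Xc F c}) : ⁅X, Y⁆ = 0 := by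
  rw [mem_span_Xc_iff] at hX hY
  rw [lie_eq_zero_iff_of_mem_antidiagSubspace hX.1 hY.1, hX.2, hY.2]
  ring

/-- A semisimple matrix of square zero vanishes. -/
theorem IsSemisimpleMat.eq_zero_of_mul_self {F : Type*} [Field F]
    {X : Matrix (Fin 2) (Fin 2) F} (hX : IsSemisimpleMat F X) (h : X * X = 0) : X = 0 := by
  obtain ⟨P, hP⟩ := hX
  set Z := X.map (algebraMap F (AlgebraicClosure F)) with hZ
  have hZZ : Z * Z = 0 := by
    rw [hZ, ← Matrix.map_mul, h, Matrix.map_zero _ (map_zero _)]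
  set D := P⁻¹.val * Z * P.val with hD
  have hDD : D * D = 0 := by
    calc D * D = P⁻¹.val * (Z * Z) * P.val := by simp [hD, mul_assoc]
      _ = 0 := by simp [hZZ]
  have hD0 : D = 0 := by
    rw [← hP.diagonal_diag, Matrix.diagonal_mul_diagonal, Matrix.diagonal_eq_zero] at hDD
    rw [← hP.diagonal_diag, Matrix.diagonal_eq_zero]
    funext i
    simpa using congrFun hDD i
  have hZ0 : Z = 0 := by
    calc Z = P.val * D * P⁻¹.val := by simp [hD, mul_assoc]
      _ = 0 := by simp [hD0]
  exact Matrix.map_injective (algebraMap F (AlgebraicClosure F)).injective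
    (hZ0.trans (Matrix.map_zero _ (map_zero _)).symm)

/-- The elements of `F · X_c` are semisimple: `X_c` has the distinct eigenvalues `±√c`. -/
theorem isSemisimpleMat_of_mem_span_Xc {F : Type*} [Field F] [CharZero F] {c : F} (hc : c ≠ 0)
    {X : Matrix (Fin 2) (Fin 2) F} (hX : X ∈ Submodule.span F {Xc F c}) :
    IsSemisimpleMat F X := by
  obtain ⟨t, rfl⟩ := Submodule.mem_span_singleton.mp hX
  obtain ⟨s, hs⟩ := IsAlgClosed.exists_pow_nat_eq (algebraMap F (AlgebraicClosure F) c) two_pos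
  have hs0 : s ≠ 0 := by
    rintro rfl
    exact hc (by simpa using hs.symm)
  have hP : IsUnit (!![s, -s; 1, 1] : Matrix (Fin 2) (Fin 2) (AlgebraicClosure F)) := by
    rw [Matrix.isUnit_iff_isUnit_det, isUnit_iff_ne_zero, Matrix.det_fin_two_of]
    have : CharZero (AlgebraicClosure F) := charZero_of_injective_algebraMap
      (algebraMap F (AlgebraicClosure F)).injective
    have h2 : (2 : AlgebraicClosure F) * s ≠ 0 := mul_ne_zero two_ne_zero hs0
    intro h
    exact h2 (by linear_combination h)
  obtain ⟨P, hP⟩ := hP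
  refine ⟨P, ?_⟩
  have hmul : (t • Xc F c).map (algebraMap F (AlgebraicClosure F)) * P.val =
      P.val * Matrix.diagonal ![algebraMap F (AlgebraicClosure F) t * s,
        -(algebraMap F (AlgebraicClosure F) t * s)] := by
    rw [hP]
    ext i j
    fin_cases i <;> fin_cases j <;>
      simp [Xc, Matrix.mul_apply, Fin.sum_univ_two, ← hs] <;> ring
  rw [mul_assoc, hmul, Units.inv_mul_cancel_left]
  exact Matrix.isDiag_diagonal _

theorem isCartanSubspace_span_Xc {F : Type*} [Field F] [CharZero F] {c : F} (hc : c ≠ 0) :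
    IsCartanSubspace F (Submodule.span F {Xc F c}) := by
  refine ⟨fun X hX => (mem_span_Xc_iff.mp hX).1,
    fun X hX Y hY => lie_eq_zero_of_mem_span_Xc hX hY,
    fun X hX => isSemisimpleMat_of_mem_span_Xc hc hX, fun 𝔟 h𝔟 hab hle => ?_⟩
  refine le_antisymm hle fun Y hY => mem_span_Xc_iff.mpr ⟨h𝔟 hY, ?_⟩
  have hX : Xc F c ∈ 𝔟 := hle (Submodule.mem_span_singleton_self _)
  have h := (lie_eq_zero_iff_of_mem_antidiagSubspace (h𝔟 hX) (h𝔟 hY)).mp (hab _ hX _ hY)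
  simpa [Xc] using h.symm

theorem Xc_ne_zero (F : Type*) [Field F] (c : F) : Xc F c ≠ 0 := fun h => by
  simpa [Xc] using congrFun (congrFun h 1) 0

theorem IsCartanSubspace.ne_bot {F : Type*} [Field F]
    {𝔞 : Submodule F (Matrix (Fin 2) (Fin 2) F)} (h : IsCartanSubspace F 𝔞) : 𝔞 ≠ ⊥ := by
  rintro rfl
  have hspan := h.2.2.2 (Submodule.span F {Xc F 1}) (fun X hX => (mem_span_Xc_iff.mp hX).1)
    (fun X hX Y hY => lie_eq_zero_of_mem_span_Xc hX hY) bot_le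
  exact Xc_ne_zero F 1 (Submodule.span_singleton_eq_bot.mp hspan.symm)

theorem IsCartanSubspace.exists_eq_span_Xc {F : Type*} [Field F]
    {𝔞 : Submodule F (Matrix (Fin 2) (Fin 2) F)} (h : IsCartanSubspace F 𝔞) :
    ∃ c : F, c ≠ 0 ∧ 𝔞 = Submodule.span F {Xc F c} := by
  obtain ⟨X, hX, hX0⟩ := Submodule.exists_mem_ne_zero_of_ne_bot h.ne_bot
  obtain ⟨hanti, hab, hss, hmax⟩ := h
  have hprod : X 0 1 * X 1 0 ≠ 0 := by
    intro hp
    refine hX0 ((hss X hX).eq_zero_of_mul_self ?_)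
    have h0 := hanti hX 0
    have h1 := hanti hX 1
    ext i j
    fin_cases i <;> fin_cases j <;>
      simp [Matrix.mul_apply, Fin.sum_univ_two, h0, h1, -mul_eq_zero, hp, mul_comm (X 1 0)]
  have h01 := left_ne_zero_of_mul hprod
  have h10 := right_ne_zero_of_mul hprod
  refine ⟨X 0 1 / X 1 0, div_ne_zero h01 h10, ?_⟩
  refine hmax _ (fun Y hY => (mem_span_Xc_iff.mp hY).1)
    (fun Y hY Z hZ => lie_eq_zero_of_mem_span_Xc hY hZ) fun Y hY => ?_
  rw [mem_span_Xc_iff]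
  have hXY := (lie_eq_zero_iff_of_mem_antidiagSubspace (hanti hX) (hanti hY)).mp (hab X hX Y hY)
  refine ⟨hanti hY, ?_⟩
  field_simp
  exact hXY.symm

/-- A subspace `𝔞 ⊆ 𝔥^⊥` is a Cartan subspace iff `𝔞 = 𝔞_c = F·X_c` for
some `c ∈ F^×`; in particular every Cartan subspace of `𝔥^⊥` is one-dimensional. -/
theorem cartan_subspaces_of_antidiag (F : Type*) [Field F] [CharZero F]
    (𝔞 : Submodule F (Matrix (Fin 2) (Fin 2) F)) :
    (IsCartanSubspace F 𝔞 ↔ ∃ c : F, c ≠ 0 ∧ 𝔞 = Submodule.span F {Xc F c}) ∧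
    (IsCartanSubspace F 𝔞 → Module.finrank F 𝔞 = 1) := by
  refine ⟨⟨IsCartanSubspace.exists_eq_span_Xc, ?_⟩, fun h => ?_⟩
  · rintro ⟨c, hc, rfl⟩
    exact isCartanSubspace_span_Xc hc
  · obtain ⟨c, -, rfl⟩ := h.exists_eq_span_Xc
    exact finrank_span_singleton (Xc_ne_zero F c)
end

section
/- Let F be a field of characteristic zero and, for c ∈ F^×, let 𝔞_c ⊆ 𝔰𝔩₂(F) be the line spanned by the matrix X_c with first row (0, c) and second row (1, 0). For c, d ∈ F^×, there exists an element h = diag(s, s⁻¹) of the diagonal torus H_F ⊆ SL₂(F) with h⁻¹ 𝔞_c h = 𝔞_d if and only if there exists r ∈ F^× with c = d r⁴. In other words, the Cartan subspaces 𝔞_c and 𝔞_d are conjugate by an element of H_F precisely when c and d represent the same fourth power class in F^×. -/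
open Matrix

/-- The Cartan subspace `𝔞_c = {(0, ct; t, 0) : t ∈ F}` of antidiagonal matrices. -/
def cartanLine (F : Type*) [Field F] (c : F) : Set (Matrix (Fin 2) (Fin 2) F) :=
  {X | ∃ t : F, X = !![0, c * t; t, 0]}

/-- Conjugation by `diag(s, s⁻¹)` scales the entries of an antidiagonal matrix by `s⁻²` and `s²`. -/
theorem diagonal_inv_mul_antidiagonal_mul_diagonal {F : Type*} [Field F] {s : F} (hs : s ≠ 0)
    (x y : F) :
    (diagonal ![s, s⁻¹])⁻¹ * !![0, x; y, 0] * diagonal ![s, s⁻¹]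
      = !![0, x * (s ^ 2)⁻¹; y * s ^ 2, 0] := by
  have hinv : (diagonal ![s, s⁻¹])⁻¹ = diagonal ![s⁻¹, s] := by
    apply inv_eq_right_inv
    ext i j
    fin_cases i <;> fin_cases j <;> simp [hs]
  rw [hinv]
  ext i j
  fin_cases i <;> fin_cases j <;> simp [Matrix.mul_apply, Fin.sum_univ_two] <;> field_simp

theorem image_conj_cartanLine {F : Type*} [Field F] {s : F} (hs : s ≠ 0) (d : F) :
    (fun X => (diagonal ![s, s⁻¹])⁻¹ * X * diagonal ![s, s⁻¹]) '' cartanLine F (d * s ^ 4)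
      = cartanLine F d := by
  ext X
  constructor
  · rintro ⟨_, ⟨t, rfl⟩, rfl⟩
    refine ⟨t * s ^ 2, ?_⟩
    simp only [diagonal_inv_mul_antidiagonal_mul_diagonal hs]
    congr 3
    field_simp
  · rintro ⟨t, rfl⟩
    refine ⟨_, ⟨t * (s ^ 2)⁻¹, rfl⟩, ?_⟩
    simp only [diagonal_inv_mul_antidiagonal_mul_diagonal hs]
    congr 3 <;> field_simp

theorem cartanLine_injective (F : Type*) [Field F] : Function.Injective (cartanLine F) := by
  intro c d h
  obtain ⟨t, ht⟩ : !![0, c * 1; 1, 0] ∈ cartanLine F d := h ▸ ⟨1, rfl⟩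
  have h₁ := congrFun (congrFun ht 0) 1
  have h₂ := congrFun (congrFun ht 1) 0
  simp at h₁ h₂
  simpa [← h₂] using h₁

/-- For `c, d ∈ F^×`, the Cartan subspaces `𝔞_c` and `𝔞_d` are conjugate
by an element `diag(s, s⁻¹)` of the diagonal torus `H_F ⊆ SL₂(F)` if and only if
`c = d r⁴` for some `r ∈ F^×`, i.e. iff `c` and `d` represent the same fourth power class. -/
theorem cartanLine_conjugate_iff_fourth_power_class
    (F : Type*) [Field F] [CharZero F] (c d : F) (hc : c ≠ 0) (hd : d ≠ 0) :
    (∃ s : F, s ≠ 0 ∧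
        (fun X => (diagonal ![s, s⁻¹])⁻¹ * X * diagonal ![s, s⁻¹]) '' cartanLine F c
          = cartanLine F d)
    ↔ ∃ r : F, r ≠ 0 ∧ c = d * r ^ 4 := by
  constructor
  · rintro ⟨s, hs, h⟩
    refine ⟨s, hs, ?_⟩
    have hcs : c = c * (s ^ 4)⁻¹ * s ^ 4 := by field_simp
    rw [hcs, image_conj_cartanLine hs] at h
    rw [← cartanLine_injective F h, ← hcs]
  · rintro ⟨r, hr, rfl⟩
    exact ⟨r, hr, image_conj_cartanLine hr d⟩
end

section
/- Let p be a prime, F = ℚ_p, and let 𝔞_c ⊆ 𝔰𝔩₂(ℚ_p) denote the line spanned by the matrix X_c with first row (0, c) and second row (1, 0), for c ∈ ℚ_p^×. Then every nonzero element of 𝔞_1 and every nonzero element of 𝔞_{p²} is diagonalizable over ℚ_p, yet there is no element h = diag(s, s⁻¹) of the diagonal torus H_F ⊆ SL₂(ℚ_p) with h⁻¹ 𝔞_1 h = 𝔞_{p²}. Hence 𝔞_1 and 𝔞_{p²} are two Cartan subspaces consisting of ℚ_p-split elements that are not conjugate under H_F. -/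
open Matrix

/-- A matrix is diagonalizable over `F` if some `P ∈ GL₂(F)` conjugates it to a
diagonal matrix. -/
def IsDiagonalizableMat (F : Type*) [Field F] (X : Matrix (Fin 2) (Fin 2) F) : Prop :=
  ∃ P : GL (Fin 2) F,
    (((P⁻¹ : GL (Fin 2) F) : Matrix (Fin 2) (Fin 2) F) * X *
      (P : Matrix (Fin 2) (Fin 2) F)).IsDiag

/-- If `c = a ^ 2` is a nonzero square, the eigenvectors `(a, 1)` and `(-a, 1)` diagonalize every
element of `𝔞_c`. -/
theorem isDiagonalizableMat_of_mem_cartanLine_sq {F : Type*} [Field F] [NeZero (2 : F)] {a : F}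
    (ha : a ≠ 0) {X : Matrix (Fin 2) (Fin 2) F} (hX : X ∈ cartanLine F (a ^ 2)) :
    IsDiagonalizableMat F X := by
  obtain ⟨t, rfl⟩ := hX
  have hdet : (!![a, -a; 1, 1] : Matrix (Fin 2) (Fin 2) F).det ≠ 0 := by
    have h : (!![a, -a; 1, 1] : Matrix (Fin 2) (Fin 2) F).det = 2 * a := by
      rw [det_fin_two_of]; ring
    rw [h]
    exact mul_ne_zero two_ne_zero ha
  let P : GL (Fin 2) F := GeneralLinearGroup.mkOfDetNeZero _ hdet
  have hP : !![0, a ^ 2 * t; t, 0] * (P : Matrix (Fin 2) (Fin 2) F) =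
      P * diagonal ![a * t, -(a * t)] := by
    change _ * !![a, -a; 1, 1] = !![a, -a; 1, 1] * _
    ext i j
    fin_cases i <;> fin_cases j <;> simp [mul_apply, Fin.sum_univ_two] <;> ring
  refine ⟨P, ?_⟩
  rw [Matrix.mul_assoc, hP, Units.inv_mul_cancel_left]
  exact isDiag_diagonal _

/-- Conjugation by `diag(s, s⁻¹)` can only carry `𝔞_c` onto `𝔞_d` when `c = d * s ^ 4`. -/
theorem eq_mul_pow_four_of_conj_cartanLine {F : Type*} [Field F] {c d s : F} (hs : s ≠ 0)
    (h : (fun X => (diagonal ![s, s⁻¹])⁻¹ * X * diagonal ![s, s⁻¹]) '' cartanLine F c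
      = cartanLine F d) : c = d * s ^ 4 := by
  have hinv : (diagonal ![s, s⁻¹])⁻¹ = diagonal ![s⁻¹, s] := by
    refine inv_eq_left_inv ?_
    ext i j
    fin_cases i <;> fin_cases j <;> simp [hs]
  obtain ⟨t, ht⟩ := h.subset (Set.mem_image_of_mem _ ⟨1, rfl⟩)
  rw [hinv] at ht
  have h01 := congrFun₂ ht 0 1
  have h10 := congrFun₂ ht 1 0
  simp [mul_apply, Fin.sum_univ_two] at h01 h10
  rw [← h10] at h01
  field_simp at h01
  rw [h01, mul_comm]

/-- The uniformizer `p` has valuation one, so its square is not the inverse of a fourth power. -/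
theorem Padic.one_ne_sq_mul_pow_four (p : ℕ) [Fact p.Prime] {s : ℚ_[p]} (hs : s ≠ 0) :
    1 ≠ (p : ℚ_[p]) ^ 2 * s ^ 4 := by
  intro h
  have hp : (p : ℚ_[p]) ≠ 0 := Nat.cast_ne_zero.mpr (Fact.out : p.Prime).ne_zero
  have hv := congrArg Padic.valuation h
  rw [Padic.valuation_one, Padic.valuation_mul (pow_ne_zero _ hp) (pow_ne_zero _ hs),
    Padic.valuation_pow, Padic.valuation_pow, Padic.valuation_p] at hv
  omega

/-- Over `ℚ_p`, every nonzero element of `𝔞_1` and of `𝔞_{p²}` is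
diagonalizable over `ℚ_p`, yet no element `diag(s, s⁻¹)` of the diagonal torus
`H_F ⊆ SL₂(ℚ_p)` conjugates `𝔞_1` onto `𝔞_{p²}`: these are two Cartan subspaces of
`ℚ_p`-split elements that are not `H_F`-conjugate. -/
theorem cartanLines_split_not_conjugate (p : ℕ) [Fact p.Prime] :
    (∀ X ∈ cartanLine ℚ_[p] 1, X ≠ 0 → IsDiagonalizableMat ℚ_[p] X) ∧
    (∀ X ∈ cartanLine ℚ_[p] ((p : ℚ_[p]) ^ 2), X ≠ 0 → IsDiagonalizableMat ℚ_[p] X) ∧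
    ¬ ∃ s : ℚ_[p], s ≠ 0 ∧
        (fun X => (diagonal ![s, s⁻¹])⁻¹ * X * diagonal ![s, s⁻¹]) '' cartanLine ℚ_[p] 1
          = cartanLine ℚ_[p] ((p : ℚ_[p]) ^ 2) := by
  have hp : (p : ℚ_[p]) ≠ 0 := Nat.cast_ne_zero.mpr (Fact.out : p.Prime).ne_zero
  refine ⟨fun X hX _ => ?_, fun X hX _ => isDiagonalizableMat_of_mem_cartanLine_sq hp hX, ?_⟩
  · rw [← one_pow 2] at hX
    exact isDiagonalizableMat_of_mem_cartanLine_sq one_ne_zero hX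
  · rintro ⟨s, hs, h⟩
    exact Padic.one_ne_sq_mul_pow_four p hs (eq_mul_pow_four_of_conj_cartanLine hs h)
end

section
/- Let F be a field of characteristic zero, c ∈ F^×, H_F = {diag(s, s⁻¹) : s ∈ F^×} ⊆ SL₂(F), and 𝔞_c ⊆ 𝔰𝔩₂(F) the line spanned by the matrix X_c with first row (0, c) and second row (1, 0). Then for s ∈ F^×: the element diag(s, s⁻¹) satisfies diag(s,s⁻¹)⁻¹ 𝔞_c diag(s,s⁻¹) = 𝔞_c if and only if s⁴ = 1, and it fixes every element of 𝔞_c under conjugation if and only if s² = 1. Consequently the quotient of the stabilizer of 𝔞_c in H_F by its pointwise fixator is a finite group of order equal to half the number of fourth roots of unity in F. -/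
open Matrix

/-- The element `h = diag(s, s⁻¹)` of the diagonal torus `H_F`, as a unit of the matrix
ring (it lies in `SL₂(F) ⊆ GL₂(F)`). -/
def Hu (F : Type*) [Field F] (s : Fˣ) : (Matrix (Fin 2) (Fin 2) F)ˣ where
  val := diagonal ![(s : F), ((s⁻¹ : Fˣ) : F)]
  inv := diagonal ![((s⁻¹ : Fˣ) : F), (s : F)]
  val_inv := by
    rw [diagonal_mul_diagonal]
    ext i j
    fin_cases i <;> fin_cases j <;> simp [Matrix.one_apply]
  inv_val := by
    rw [diagonal_mul_diagonal]
    ext i j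
    fin_cases i <;> fin_cases j <;> simp [Matrix.one_apply]

/-- Conjugation `X ↦ h⁻¹ X h` by `h = diag(s, s⁻¹)`. -/
def conjH (F : Type*) [Field F] (s : Fˣ) (X : Matrix (Fin 2) (Fin 2) F) :
    Matrix (Fin 2) (Fin 2) F :=
  (((Hu F s)⁻¹ : (Matrix (Fin 2) (Fin 2) F)ˣ) : Matrix (Fin 2) (Fin 2) F) * X *
    ((Hu F s : (Matrix (Fin 2) (Fin 2) F)ˣ) : Matrix (Fin 2) (Fin 2) F)

lemma Hu_one (F : Type*) [Field F] : Hu F (1 : Fˣ) = 1 := by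
  apply Units.ext
  show diagonal ![((1 : Fˣ) : F), (((1 : Fˣ)⁻¹ : Fˣ) : F)] = 1
  ext i j
  fin_cases i <;> fin_cases j <;> simp [Matrix.one_apply]

lemma Hu_mul (F : Type*) [Field F] (s t : Fˣ) : Hu F (s * t) = Hu F s * Hu F t := by
  apply Units.ext
  rw [Units.val_mul]
  show diagonal ![((s * t : Fˣ) : F), (((s * t)⁻¹ : Fˣ) : F)]
      = diagonal ![(s : F), ((s⁻¹ : Fˣ) : F)] * diagonal ![(t : F), ((t⁻¹ : Fˣ) : F)]
  rw [diagonal_mul_diagonal]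
  ext i j
  fin_cases i <;> fin_cases j <;> simp [_root_.mul_inv_rev, mul_comm]

lemma Hu_inv (F : Type*) [Field F] (s : Fˣ) : Hu F s⁻¹ = (Hu F s)⁻¹ := by
  apply Units.ext
  show diagonal ![((s⁻¹ : Fˣ) : F), (((s⁻¹)⁻¹ : Fˣ) : F)]
      = diagonal ![((s⁻¹ : Fˣ) : F), (s : F)]
  rw [inv_inv]

private lemma conj_key (F : Type*) [Field F] (u : (Matrix (Fin 2) (Fin 2) F)ˣ)
    (X : Matrix (Fin 2) (Fin 2) F) :
    (u : Matrix (Fin 2) (Fin 2) F) *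
        (((u⁻¹ : (Matrix (Fin 2) (Fin 2) F)ˣ) : Matrix (Fin 2) (Fin 2) F) * X *
          (u : Matrix (Fin 2) (Fin 2) F)) *
        ((u⁻¹ : (Matrix (Fin 2) (Fin 2) F)ˣ) : Matrix (Fin 2) (Fin 2) F) = X := by
  rw [mul_assoc ((u⁻¹ : (Matrix (Fin 2) (Fin 2) F)ˣ) : Matrix (Fin 2) (Fin 2) F) X
      (u : Matrix (Fin 2) (Fin 2) F),
    Units.mul_inv_cancel_left, Units.mul_inv_cancel_right]

lemma conjH_mul (F : Type*) [Field F] (s t : Fˣ) (X : Matrix (Fin 2) (Fin 2) F) :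
    conjH F (s * t) X = conjH F t (conjH F s X) := by
  unfold conjH
  rw [Hu_mul, _root_.mul_inv_rev, Units.val_mul, Units.val_mul]
  simp [mul_assoc]

lemma conjH_inv_conjH (F : Type*) [Field F] (s : Fˣ) (X : Matrix (Fin 2) (Fin 2) F) :
    conjH F s⁻¹ (conjH F s X) = X := by
  unfold conjH
  rw [Hu_inv, inv_inv]
  exact conj_key F (Hu F s) X

/-- The stabilizer of `𝔞_c` in `H_F ≅ Fˣ`: those `s` with `h⁻¹ 𝔞_c h = 𝔞_c`. -/
def stabSubgroup (F : Type*) [Field F] (c : F) : Subgroup Fˣ where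
  carrier := {s : Fˣ | conjH F s '' cartanLine F c = cartanLine F c}
  one_mem' := by
    show conjH F 1 '' cartanLine F c = cartanLine F c
    have h : conjH F (1 : Fˣ) = id := by
      funext X
      simp [conjH, Hu_one]
    rw [h, Set.image_id]
  mul_mem' := by
    intro s t hs ht
    show conjH F (s * t) '' cartanLine F c = cartanLine F c
    have h : conjH F (s * t) = conjH F t ∘ conjH F s := funext fun X => conjH_mul F s t X
    rw [h, Set.image_comp]
    rw [show conjH F s '' cartanLine F c = cartanLine F c from hs]
    exact ht
  inv_mem' := by
    intro s hs
    show conjH F s⁻¹ '' cartanLine F c = cartanLine F c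
    conv_lhs => rw [← show conjH F s '' cartanLine F c = cartanLine F c from hs]
    rw [← Set.image_comp]
    have h : conjH F s⁻¹ ∘ conjH F s = id := funext fun X => conjH_inv_conjH F s X
    rw [h, Set.image_id]

/-- The pointwise fixator of `𝔞_c` in `H_F ≅ Fˣ`: those `s` with `h⁻¹ X h = X` for all
`X ∈ 𝔞_c`. -/
def fixSubgroup (F : Type*) [Field F] (c : F) : Subgroup Fˣ where
  carrier := {s : Fˣ | ∀ X ∈ cartanLine F c, conjH F s X = X}
  one_mem' := by
    intro X hX
    simp [conjH, Hu_one]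
  mul_mem' := by
    intro s t hs ht X hX
    rw [conjH_mul, hs X hX, ht X hX]
  inv_mem' := by
    intro s hs X hX
    calc conjH F s⁻¹ X = conjH F s⁻¹ (conjH F s X) := by rw [hs X hX]
      _ = X := conjH_inv_conjH F s X

lemma conjH_antidiagonal (F : Type*) [Field F] (s : Fˣ) (a b : F) :
    conjH F s !![0, a; b, 0] = !![0, (s : F)⁻¹ ^ 2 * a; (s : F) ^ 2 * b, 0] := by
  change diagonal ![((s⁻¹ : Fˣ) : F), (s : F)] * !![0, a; b, 0] *
    diagonal ![(s : F), ((s⁻¹ : Fˣ) : F)] = _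
  ext i j
  fin_cases i <;> fin_cases j <;> simp [Matrix.mul_apply, Fin.sum_univ_two] <;> ring

lemma conjH_image_cartanLine_subset (F : Type*) [Field F] (c : F) {s : Fˣ}
    (hs : (s : F) ^ 4 = 1) : conjH F s '' cartanLine F c ⊆ cartanLine F c := by
  rintro _ ⟨_, ⟨t, rfl⟩, rfl⟩
  refine ⟨(s : F) ^ 2 * t, ?_⟩
  have h : (s : F)⁻¹ ^ 2 = (s : F) ^ 2 := by
    have := s.ne_zero
    field_simp
    exact hs.symm
  rw [conjH_antidiagonal, h, mul_left_comm]

lemma conjH_image_cartanLine_eq_iff (F : Type*) [Field F] {c : F} (hc : c ≠ 0) (s : Fˣ) :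
    conjH F s '' cartanLine F c = cartanLine F c ↔ (s : F) ^ 4 = 1 := by
  refine ⟨fun h => ?_, fun hs => (conjH_image_cartanLine_subset F c hs).antisymm ?_⟩
  · obtain ⟨t, ht⟩ : conjH F s !![0, c * 1; 1, 0] ∈ cartanLine F c :=
      h ▸ Set.mem_image_of_mem _ ⟨1, rfl⟩
    rw [conjH_antidiagonal] at ht
    have h01 : (s : F)⁻¹ ^ 2 * (c * 1) = c * t := congrFun (congrFun ht 0) 1
    have h10 : (s : F) ^ 2 * 1 = t := congrFun (congrFun ht 1) 0
    have hs := s.ne_zero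
    rw [← h10] at h01
    field_simp at h01
    exact h01.symm
  · intro X hX
    have hs' : ((s⁻¹ : Fˣ) : F) ^ 4 = 1 := by simp [hs]
    refine ⟨conjH F s⁻¹ X,
      conjH_image_cartanLine_subset F c hs' (Set.mem_image_of_mem _ hX), ?_⟩
    simpa using conjH_inv_conjH F s⁻¹ X

lemma conjH_fixes_cartanLine_iff (F : Type*) [Field F] (c : F) (s : Fˣ) :
    (∀ X ∈ cartanLine F c, conjH F s X = X) ↔ (s : F) ^ 2 = 1 := by
  constructor
  · intro h
    have h1 := h _ ⟨1, rfl⟩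
    rw [conjH_antidiagonal] at h1
    simpa using congrFun (congrFun h1 1) 0
  · rintro hs _ ⟨t, rfl⟩
    rw [conjH_antidiagonal, inv_pow, hs, inv_one, one_mul, one_mul]

lemma stabSubgroup_eq_rootsOfUnity (F : Type*) [Field F] {c : F} (hc : c ≠ 0) :
    stabSubgroup F c = rootsOfUnity 4 F := by
  ext s
  rw [mem_rootsOfUnity']
  exact conjH_image_cartanLine_eq_iff F hc s

lemma fixSubgroup_eq_rootsOfUnity (F : Type*) [Field F] (c : F) :
    fixSubgroup F c = rootsOfUnity 2 F := by
  ext s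
  rw [mem_rootsOfUnity']
  exact conjH_fixes_cartanLine_iff F c s

lemma natCard_rootsOfUnity_eq (F : Type*) [Field F] (n : ℕ) [NeZero n] :
    Nat.card (rootsOfUnity n F) = Nat.card {s : F | s ^ n = 1} :=
  Nat.card_congr <| (rootsOfUnityEquivNthRoots F n).trans <|
    Equiv.subtypeEquivRight fun _ => Polynomial.mem_nthRoots (NeZero.pos n)

lemma natCard_rootsOfUnity_two (F : Type*) [Field F] [CharZero F] :
    Nat.card (rootsOfUnity 2 F) = 2 :=
  (IsPrimitiveRoot.neg_one 0 (by decide)).card_rootsOfUnity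

/-- For `s ∈ F^×`: `diag(s,s⁻¹)` stabilizes `𝔞_c` iff `s⁴ = 1`, and
fixes `𝔞_c` pointwise iff `s² = 1`; consequently the quotient of the stabilizer of `𝔞_c`
in `H_F` by its pointwise fixator is a finite group whose order is half the number of
fourth roots of unity in `F`. -/
theorem stab_quotient_fix_order (F : Type*) [Field F] [CharZero F] (c : F) (hc : c ≠ 0) :
    (∀ s : Fˣ,
      (conjH F s '' cartanLine F c = cartanLine F c ↔ (s : F) ^ 4 = 1) ∧
      ((∀ X ∈ cartanLine F c, conjH F s X = X) ↔ (s : F) ^ 2 = 1)) ∧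
    Finite (stabSubgroup F c ⧸ (fixSubgroup F c).subgroupOf (stabSubgroup F c)) ∧
    Nat.card (stabSubgroup F c ⧸ (fixSubgroup F c).subgroupOf (stabSubgroup F c)) * 2
      = Nat.card {s : F | s ^ 4 = 1} := by
  refine ⟨fun s => ⟨conjH_image_cartanLine_eq_iff F hc s, conjH_fixes_cartanLine_iff F c s⟩, ?_⟩
  rw [stabSubgroup_eq_rootsOfUnity F hc, fixSubgroup_eq_rootsOfUnity F c]
  refine ⟨inferInstance, ?_⟩
  have hle : rootsOfUnity 2 F ≤ rootsOfUnity 4 F := rootsOfUnity_le_of_dvd (by decide)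
  have hcard : Nat.card ((rootsOfUnity 2 F).subgroupOf (rootsOfUnity 4 F)) = 2 :=
    (Nat.card_congr (Subgroup.subgroupOfEquivOfLe hle).toEquiv).trans (natCard_rootsOfUnity_two F)
  have hindex := ((rootsOfUnity 2 F).subgroupOf (rootsOfUnity 4 F)).index_mul_card
  rw [hcard] at hindex
  exact hindex.trans (natCard_rootsOfUnity_eq F 4)
end
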